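/- arXiv:1405.3194 — 4 statements merged into one kernel-verified Lean document; each statement's English description precedes it below -/
import Mathlib

section
/- For every positive integer k, the alternating quadratic sine sum satisfies ∑_{n=1}^{2k} (-1)^n * sin(π n² / (4k)) = (-1)^k * √(k/2). -/
/-!
The Gaussian average of a periodic function `f`, weighted by `exp (-π n² / a)`, tends to its mean
over a period when `re a → ∞`: by Poisson summation on each residue class, only the constant
Fourier mode survives. For the phase `n ↦ e ^ (π i c n²)` the functional equation of the theta
function turns the average at a real `T` into the average of the phase with parameter `-1 / c` at
`c² T + c i`, whose real part also tends to infinity. Equality of the two limits for `c = p / q` is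
the Landsberg–Schaar reciprocity law, and `p = 1` evaluates `∑ e ^ (π i n² / q)` for even `q`.

Taking imaginary parts with `q = 4 k` gives a sine sum over a full period, symmetric about `2 k`.
Shifting `n` by `2 k` multiplies each term by `(-1) ^ (k + n)`, so the alternating sum is half of it
up to the sign `(-1) ^ k`.
-/

open Finset Real

open Complex (I)
open Filter Topology

theorem tendsto_jacobiTheta₂_comap_im_atTop (z : ℂ) :
    Tendsto (jacobiTheta₂ z) (comap Complex.im atTop) (𝓝 1) := by
  have hterm (n : ℤ) : Tendsto (jacobiTheta₂_term n z) (comap Complex.im atTop)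
      (𝓝 (if n = 0 then 1 else 0)) := by
    split_ifs with hn
    · exact tendsto_const_nhds.congr fun τ => by simp [hn, jacobiTheta₂_term]
    · rw [tendsto_zero_iff_norm_tendsto_zero]
      simp_rw [norm_jacobiTheta₂_term]
      have hneg : -π * (n : ℝ) ^ 2 < 0 :=
        mul_neg_of_neg_of_pos (neg_neg_of_pos pi_pos) (by positivity)
      exact tendsto_exp_atBot.comp <| tendsto_atBot_add_const_right _ _ <|
        tendsto_comap.const_mul_atTop_of_neg hneg
  have hbound : ∀ᶠ τ in comap Complex.im atTop, ∀ n : ℤ,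
      ‖jacobiTheta₂_term n z τ‖ ≤ |(n : ℝ)| ^ 0 * exp (-π * (1 * n ^ 2 - 2 * |z.im| * |n|)) := by
    filter_upwards [tendsto_comap.eventually_ge_atTop 1] with τ hτ n
    simpa only [pow_zero, one_mul] using norm_jacobiTheta₂_term_le one_pos le_rfl hτ n
  have hlim := tendsto_tsum_of_dominated_convergence
    (by exact_mod_cast summable_pow_mul_jacobiTheta₂_term_bound |z.im| one_pos 0) hterm hbound
  rwa [tsum_ite_eq] at hlim

theorem tsum_exp_neg_mul_int_add_sq {a : ℂ} (ha : 0 < a.re) (x : ℂ) :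
    ∑' m : ℤ, Complex.exp (-π / a * (m + x) ^ 2) = a ^ (1 / 2 : ℂ) * jacobiTheta₂ x (I * a) := by
  have ha0 : a ≠ 0 := by rintro rfl; simp at ha
  have hpow : a ^ (1 / 2 : ℂ) ≠ 0 := by simp [Complex.cpow_eq_zero_iff, ha0]
  have hterm (n : ℤ) : Complex.exp (-π * a * n ^ 2 + 2 * π * (-I * x) * n) =
      jacobiTheta₂_term n (-x) (I * a) := by
    rw [jacobiTheta₂_term]
    congr 1
    linear_combination -(π * a * n ^ 2) * Complex.I_sq
  have hshift : I * (-I * x) = x := by linear_combination -x * Complex.I_sq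
  have h := Complex.tsum_exp_neg_quadratic ha (-I * x)
  rw [tsum_congr hterm, hshift, ← jacobiTheta₂, jacobiTheta₂_neg_left] at h
  rw [h]
  field_simp

theorem summable_norm_exp_neg_div_mul_int_sq {a : ℂ} (ha : 0 < a.re) :
    Summable fun n : ℤ => ‖Complex.exp (-π / a * n ^ 2)‖ := by
  have him : 0 < (I / a).im := by
    rw [div_eq_mul_inv, Complex.I_mul_im, Complex.inv_re]
    exact div_pos ha (Complex.normSq_pos.mpr (by rintro rfl; simp at ha))
  refine ((summable_jacobiTheta₂_term_iff 0 (I / a)).mpr him).norm.congr fun n => ?_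
  rw [jacobiTheta₂_term]
  congr 2
  linear_combination (π * n ^ 2 / a) * Complex.I_sq

theorem summable_mul_of_periodic {R : Type*} [NormedRing R] [CompleteSpace R] {f g : ℤ → R} {c : ℤ}
    (hc : 0 < c) (hf : Function.Periodic f c) (hg : Summable fun n => ‖g n‖) :
    Summable fun n => f n * g n := by
  have hfin : (Set.range f).Finite := by
    rw [← Function.Periodic.image_Ioc hf hc 0]
    exact (Set.finite_Ioc _ _).image f
  obtain ⟨C, hC⟩ := hfin.isBounded.exists_norm_le
  refine (hg.mul_left C).of_norm_bounded fun n => (norm_mul_le _ _).trans ?_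
  gcongr
  exact hC _ (Set.mem_range_self n)

theorem tsum_int_eq_sum_range_tsum {E : Type*} [AddCommGroup E] [UniformSpace E]
    [IsUniformAddGroup E] [CompleteSpace E] [T0Space E] {N : ℕ} (hN : N ≠ 0) {f : ℤ → E}
    (hf : Summable f) :
    ∑' n, f n = ∑ r ∈ range N, ∑' m : ℤ, f (m * N + r) := by
  have : NeZero N := ⟨hN⟩
  let e := (Equiv.prodComm (Fin N) ℤ).trans (Int.divModEquiv N).symm
  have he : Summable fun x => f (e x) := e.summable_iff.mpr hf
  rw [← e.tsum_eq, he.tsum_prod, tsum_fintype,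
    ← Fin.sum_univ_eq_sum_range fun r => ∑' m : ℤ, f (m * N + r)]
  rfl

theorem mul_cpow_of_re_nonneg_of_re_pos {v w : ℂ} (hv : 0 ≤ v.re) (hw : 0 < w.re) (s : ℂ) :
    (v * w) ^ s = v ^ s * w ^ s := by
  have hw0 : w ≠ 0 := by rintro rfl; simp at hw
  rcases eq_or_ne v 0 with rfl | hv0
  · rcases eq_or_ne s 0 with rfl | hs <;> simp [*]
  have hargv := abs_le.mp (Complex.abs_arg_le_pi_div_two_iff.mpr hv)
  have hargw := abs_lt.mp (Complex.abs_arg_lt_pi_div_two_iff.mpr (.inl hw))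
  have hlog : Complex.log (v * w) = Complex.log v + Complex.log w :=
    (Complex.log_mul_eq_add_log_iff hv0 hw0).mpr ⟨by linarith, by linarith⟩
  rw [Complex.cpow_def_of_ne_zero (mul_ne_zero hv0 hw0), Complex.cpow_def_of_ne_zero hv0,
    Complex.cpow_def_of_ne_zero hw0, hlog, add_mul, Complex.exp_add]

theorem div_natCast_sq_cpow_half {a : ℂ} {N : ℕ} (hN : N ≠ 0) (ha : 0 < a.re) :
    (a / N ^ 2) ^ (1 / 2 : ℂ) = a ^ (1 / 2 : ℂ) / N := by
  have hN' : 0 < (N : ℝ)⁻¹ := by positivity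
  have hsq : a / N ^ 2 = ((N : ℝ)⁻¹ : ℝ) ^ 2 * a := by
    push_cast
    ring
  rw [hsq, mul_cpow_of_re_nonneg_of_re_pos (by norm_cast; positivity) ha, one_div,
    Complex.sq_cpow_two_inv (by simpa using hN')]
  push_cast
  ring

theorem ofReal_mul_I_cpow_half {c : ℝ} (hc : 0 < c) :
    (c * I) ^ (1 / 2 : ℂ) = √c * Complex.exp ((π / 4 : ℝ) * I) := by
  have hI : Complex.exp ((π / 4 : ℝ) * I) ^ 2 = I := by
    rw [← Complex.exp_nat_mul]
    convert Complex.exp_pi_div_two_mul_I using 2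
    push_cast
    ring
  have hsq : (c * I : ℂ) = (√c * Complex.exp ((π / 4 : ℝ) * I)) ^ 2 := by
    rw [mul_pow, hI, ← Complex.ofReal_pow, sq_sqrt hc.le]
  rw [hsq, one_div, Complex.sq_cpow_two_inv]
  rw [Complex.re_ofReal_mul, Complex.exp_ofReal_mul_I_re, cos_pi_div_four]
  positivity

/-- The average of `f` against the Gaussian weights `exp (-π n² / a)`, whose total mass is
asymptotic to `a ^ (1 / 2)`; it is meant for `0 < a.re`, and the square root is the principal
one. -/
noncomputable def gaussianAverage (f : ℤ → ℂ) (a : ℂ) : ℂ :=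
  (∑' n : ℤ, f n * Complex.exp (-π / a * n ^ 2)) / a ^ (1 / 2 : ℂ)

theorem gaussianAverage_eq_sum_jacobiTheta₂ {f : ℤ → ℂ} {N : ℕ} (hN : N ≠ 0)
    (hf : Function.Periodic f N) {a : ℂ} (ha : 0 < a.re) :
    gaussianAverage f a =
      (∑ r ∈ range N, f r * jacobiTheta₂ (r / N) (I * (a / N ^ 2))) / N := by
  have ha0 : a ≠ 0 := by rintro rfl; simp at ha
  have hpow : a ^ (1 / 2 : ℂ) ≠ 0 := by simp [Complex.cpow_eq_zero_iff, ha0]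
  have hre : 0 < (a / N ^ 2).re := by
    rw [← Nat.cast_pow, Complex.div_natCast_re]
    positivity
  have hroot := div_natCast_sq_cpow_half hN ha
  have hclass (r : ℕ) : ∑' m : ℤ, f (m * N + r : ℤ) * Complex.exp (-π / a * (m * N + r : ℤ) ^ 2) =
      f r * (a ^ (1 / 2 : ℂ) / N * jacobiTheta₂ (r / N) (I * (a / N ^ 2))) := by
    rw [← hroot, ← tsum_exp_neg_mul_int_add_sq hre, ← tsum_mul_left]
    refine tsum_congr fun m => ?_
    have hper : f (m * N + r) = f r := by
      rw [add_comm]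
      exact hf.int_mul m r
    rw [hper]
    congr 2
    push_cast
    field_simp
  have hsummable : Summable fun n : ℤ => f n * Complex.exp (-π / a * n ^ 2) :=
    summable_mul_of_periodic (Int.natCast_pos.mpr hN.bot_lt) hf
      (summable_norm_exp_neg_div_mul_int_sq ha)
  rw [gaussianAverage, tsum_int_eq_sum_range_tsum hN hsummable]
  simp_rw [hclass, sum_div]
  refine sum_congr rfl fun r _ => ?_
  field_simp

theorem tendsto_gaussianAverage {f : ℤ → ℂ} {N : ℕ} (hN : N ≠ 0) (hf : Function.Periodic f N) :
    Tendsto (gaussianAverage f) (comap Complex.re atTop) (𝓝 ((∑ r ∈ range N, f r) / N)) := by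
  have hscale : Tendsto (fun a : ℂ => I * (a / N ^ 2)) (comap Complex.re atTop)
      (comap Complex.im atTop) := by
    refine tendsto_comap_iff.mpr ?_
    have h : Tendsto (fun a : ℂ => a.re / (N : ℝ) ^ 2) (comap Complex.re atTop) atTop :=
      tendsto_comap.atTop_div_const (by positivity)
    refine h.congr fun a => ?_
    rw [Function.comp_apply, Complex.I_mul_im, ← Nat.cast_pow, ← Nat.cast_pow,
      Complex.div_natCast_re]
  have hlim := (tendsto_finsetSum (range N) fun r _ =>
    ((tendsto_jacobiTheta₂_comap_im_atTop (r / N)).comp hscale).const_mul (f r)).div_const (N : ℂ)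
  simp only [mul_one] at hlim
  refine hlim.congr' ?_
  filter_upwards [tendsto_comap.eventually_gt_atTop 0] with a ha
  exact (gaussianAverage_eq_sum_jacobiTheta₂ hN hf ha).symm

/-- The quadratic phase `n ↦ e ^ (π i c n²)`, the summand of quadratic Gauss sums. -/
noncomputable def quadraticPhase (c : ℝ) (n : ℤ) : ℂ :=
  Complex.exp (π * c * n ^ 2 * I)

theorem quadraticPhase_zero (c : ℝ) : quadraticPhase c 0 = 1 := by
  simp [quadraticPhase]

theorem quadraticPhase_periodic {c : ℝ} {N : ℕ} {m : ℤ} (hm : c * N = m) (heven : Even (m * N)) :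
    Function.Periodic (quadraticPhase c) N := by
  intro n
  obtain ⟨j, hj⟩ := heven
  have hm' : (c * N : ℂ) = m := by exact_mod_cast hm
  have hj' : (m * N : ℂ) = j + j := by exact_mod_cast hj
  refine Complex.exp_eq_exp_iff_exists_int.mpr ⟨m * n + j, ?_⟩
  push_cast
  linear_combination (π * I * (2 * n + N)) * hm' + π * I * hj'

theorem gaussianAverage_quadraticPhase {c T : ℝ} (hc : c ≠ 0) (hT : 0 < T) :
    gaussianAverage (quadraticPhase c) T =
      (c * I) ^ (1 / 2 : ℂ) * gaussianAverage (quadraticPhase (-c⁻¹)) (c ^ 2 * T + c * I) := by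
  have hcC : (c : ℂ) ≠ 0 := by exact_mod_cast hc
  have hTC : (T : ℂ) ≠ 0 := by exact_mod_cast hT.ne'
  set z : ℂ := (T : ℂ)⁻¹ - c * I with hz
  have hzre : 0 < z.re := by simpa [hz, ← Complex.ofReal_inv] using hT
  have hz0 : z ≠ 0 := by intro h; simp [h] at hzre
  have hfactor : c ^ 2 * T + c * I = c * I * (T * z) := by
    rw [hz]
    field_simp
    linear_combination c * T * Complex.I_sq
  have hroot : (c ^ 2 * T + c * I : ℂ) ^ (1 / 2 : ℂ) =
      (c * I) ^ (1 / 2 : ℂ) * ((T : ℂ) ^ (1 / 2 : ℂ) * z ^ (1 / 2 : ℂ)) := by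
    rw [hfactor, mul_cpow_of_re_nonneg_of_re_pos (by simp) (by simpa using mul_pos hT hzre),
      mul_cpow_of_re_nonneg_of_re_pos (by simpa using hT.le) hzre]
  have hleft (n : ℤ) : quadraticPhase c n * Complex.exp (-π / T * n ^ 2) =
      Complex.exp (-π * z * n ^ 2) := by
    rw [quadraticPhase, ← Complex.exp_add, hz]
    congr 1
    ring
  have hright (n : ℤ) : Complex.exp (-π / z * n ^ 2) =
      quadraticPhase (-c⁻¹) n * Complex.exp (-π / (c ^ 2 * T + c * I) * n ^ 2) := by
    rw [quadraticPhase, ← Complex.exp_add, hfactor]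
    congr 1
    have hTz : T * z = 1 - c * T * I := by
      rw [hz]
      field_simp
    have hI := Complex.I_ne_zero
    push_cast
    field_simp
    linear_combination -n ^ 2 * hTz + n ^ 2 * T * z * Complex.I_sq
  rw [gaussianAverage, gaussianAverage, tsum_congr hleft, Complex.tsum_exp_neg_mul_int_sq hzre,
    tsum_congr hright, hroot]
  field_simp

theorem mean_quadraticPhase_div {p q : ℕ} (hp : p ≠ 0) (hq : q ≠ 0) (heven : Even (p * q)) :
    (∑ n ∈ range q, quadraticPhase (p / q) n) / q =
      ((p / q : ℝ) * I) ^ (1 / 2 : ℂ) * ((∑ n ∈ range p, quadraticPhase (-(q / p)) n) / p) := by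
  have hperq : Function.Periodic (quadraticPhase (p / q)) q :=
    quadraticPhase_periodic (m := p) (by field_simp; simp) (by exact_mod_cast heven)
  have hperp : Function.Periodic (quadraticPhase (-(q / p))) p :=
    quadraticPhase_periodic (m := -q) (by push_cast; field_simp)
      (by rw [neg_mul, even_neg, mul_comm]; exact_mod_cast heven)
  have hleft : Tendsto (fun T : ℝ => (T : ℂ)) atTop (comap Complex.re atTop) :=
    tendsto_comap_iff.mpr tendsto_id
  have hright : Tendsto (fun T : ℝ => ((p / q : ℝ) ^ 2 * T + (p / q : ℝ) * I : ℂ)) atTop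
      (comap Complex.re atTop) := by
    refine tendsto_comap_iff.mpr ?_
    have h : Tendsto (fun T : ℝ => (p / q : ℝ) ^ 2 * T) atTop atTop :=
      tendsto_id.const_mul_atTop (by positivity)
    refine h.congr fun T => ?_
    rw [Function.comp_apply, Complex.add_re, ← Complex.ofReal_pow, Complex.re_ofReal_mul]
    simp
  refine tendsto_nhds_unique_of_eventuallyEq ((tendsto_gaussianAverage hq hperq).comp hleft)
    (((tendsto_gaussianAverage hp hperp).comp hright).const_mul _) ?_
  filter_upwards [eventually_gt_atTop 0] with T hT
  rw [Function.comp_apply, gaussianAverage_quadraticPhase (by positivity) hT, inv_div,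
    Function.comp_apply]

theorem landsberg_schaar_reciprocity {p q : ℕ} (hp : p ≠ 0) (hq : q ≠ 0) (heven : Even (p * q)) :
    (∑ n ∈ range q, quadraticPhase (p / q) n) / √q =
      Complex.exp ((π / 4 : ℝ) * I) * ((∑ n ∈ range p, quadraticPhase (-(q / p)) n) / √p) := by
  have hmeans := mean_quadraticPhase_div hp hq heven
  have hsq (m : ℕ) : (m : ℂ) = √m ^ 2 := by
    rw [← Complex.ofReal_pow, sq_sqrt m.cast_nonneg, Complex.ofReal_natCast]
  have hpsqrt : (√p : ℂ) ≠ 0 := by simpa using hp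
  have hqsqrt : (√q : ℂ) ≠ 0 := by simpa using hq
  rw [ofReal_mul_I_cpow_half (by positivity), sqrt_div p.cast_nonneg, hsq p, hsq q] at hmeans
  push_cast at hmeans ⊢
  field_simp at hmeans ⊢
  linear_combination hmeans

theorem sum_range_quadraticPhase_one_div {N : ℕ} (hN : Even N) :
    ∑ n ∈ range N, quadraticPhase (1 / N) n = √N * Complex.exp ((π / 4 : ℝ) * I) := by
  rcases eq_or_ne N 0 with rfl | hN0
  · simp
  have hsqrt : (√N : ℂ) ≠ 0 := by simpa using hN0
  have h := landsberg_schaar_reciprocity one_ne_zero hN0 (by rwa [one_mul])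
  simp only [Nat.cast_one, Nat.cast_zero, range_one, sum_singleton, quadraticPhase_zero, sqrt_one,
    Complex.ofReal_one, div_one, mul_one] at h
  rw [div_eq_iff hsqrt] at h
  rw [h, mul_comm]

theorem sum_range_sin_pi_mul_sq_div {N : ℕ} (hN : Even N) :
    ∑ n ∈ range N, sin (π * n ^ 2 / N) = √(N / 2) := by
  have him (n : ℕ) : (quadraticPhase (1 / N) n).im = sin (π * n ^ 2 / N) := by
    rw [← Complex.exp_ofReal_mul_I_im, quadraticPhase]
    congr 2
    push_cast
    ring
  have h := congrArg Complex.im (sum_range_quadraticPhase_one_div hN)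
  rw [Complex.im_sum, Complex.im_ofReal_mul, Complex.exp_ofReal_mul_I_im, sin_pi_div_four,
    sum_congr rfl fun n _ => him n] at h
  rw [h, sqrt_div (by positivity)]
  field_simp
  norm_num

theorem sum_range_two_mul_add_of_symm {M : Type*} [AddCommMonoid M] {f : ℕ → M} {m : ℕ}
    (hf : ∀ n ≤ m, f (m - n) = f (m + n)) :
    ∑ n ∈ range (2 * m), f n + f m = 2 • ∑ n ∈ range m, f (m + n) + f (2 * m) := by
  have hreflect : ∑ n ∈ range (m + 1), f n = ∑ n ∈ range (m + 1), f (m + n) := by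
    rw [← sum_range_reflect]
    refine sum_congr rfl fun n hn => ?_
    rw [add_tsub_cancel_right, hf n (by grind)]
  rw [sum_range_succ, sum_range_succ, ← two_mul] at hreflect
  rw [two_mul m, sum_range_add, add_right_comm, hreflect, two_nsmul, two_mul m]
  abel

theorem sum_Icc_one_eq_sum_range {M : Type*} [AddCommMonoid M] {f : ℕ → M} {m : ℕ}
    (hf : f 0 = f m) : ∑ n ∈ Icc 1 m, f n = ∑ n ∈ range m, f n := by
  cases m with
  | zero => rfl
  | succ m =>
    rw [← Ico_add_one_right_eq_Icc, sum_Ico_eq_sum_range, sum_range_succ', hf,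
      add_tsub_cancel_right, sum_range_succ]
    simp only [add_comm 1]

theorem sin_pi_mul_two_mul_mul_sq_div {k : ℕ} (hk : k ≠ 0) (j : ℕ) :
    sin (π * (2 * k * j : ℕ) ^ 2 / (4 * k)) = 0 := by
  have hmul : π * (2 * k * j : ℕ) ^ 2 / (4 * k) = (k * j ^ 2 : ℕ) * π := by
    push_cast
    field_simp
    ring
  rw [hmul, sin_nat_mul_pi]

theorem neg_one_pow_mul_sin_pi_mul_sq_div {k : ℕ} (hk : k ≠ 0) (n : ℕ) :
    (-1) ^ n * sin (π * n ^ 2 / (4 * k)) =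
      (-1) ^ k * sin (π * (2 * k + n : ℕ) ^ 2 / (4 * k)) := by
  have hshift : π * (2 * k + n : ℕ) ^ 2 / (4 * k) = π * n ^ 2 / (4 * k) + (k + n : ℕ) * π := by
    push_cast
    field_simp
    ring
  rw [hshift, sin_add_nat_mul_pi, ← mul_assoc, ← pow_add, ← add_assoc, ← two_mul, pow_add, pow_mul]
  simp

theorem sin_pi_mul_two_mul_sub_sq_div {k n : ℕ} (hk : k ≠ 0) (hn : n ≤ 2 * k) :
    sin (π * (2 * k - n : ℕ) ^ 2 / (4 * k)) = sin (π * (2 * k + n : ℕ) ^ 2 / (4 * k)) := by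
  rw [← sin_sub_nat_mul_two_pi (π * (2 * k + n : ℕ) ^ 2 / (4 * k)) n]
  congr 1
  push_cast [hn]
  field_simp
  ring

theorem sum_range_sin_pi_mul_two_mul_add_sq_div (k : ℕ) :
    ∑ n ∈ range (2 * k), sin (π * (2 * k + n : ℕ) ^ 2 / (4 * k)) = √(k / 2) := by
  rcases eq_or_ne k 0 with rfl | hk
  · simp
  let f : ℕ → ℝ := fun n => sin (π * n ^ 2 / (4 * k))
  have hsymm (n : ℕ) (hn : n ≤ 2 * k) : f (2 * k - n) = f (2 * k + n) :=
    sin_pi_mul_two_mul_sub_sq_div hk hn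
  have hmid : f (2 * k) = 0 := by
    simpa only [mul_one] using sin_pi_mul_two_mul_mul_sq_div hk 1
  have hend : f (2 * (2 * k)) = 0 := by
    simpa only [mul_comm _ 2] using sin_pi_mul_two_mul_mul_sq_div hk 2
  have hsum : ∑ n ∈ range (2 * (2 * k)), f n = √((4 * k : ℕ) / 2) := by
    rw [← sum_range_sin_pi_mul_sq_div ⟨2 * k, by ring⟩, ← mul_assoc]
    simp [f]
  have hsqrt : √((4 * k : ℕ) / 2) = 2 * √(k / 2) := by
    have hsq : ((4 * k : ℕ) / 2 : ℝ) = 2 ^ 2 * (k / 2) := by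
      push_cast
      ring
    rw [hsq, sqrt_mul (by positivity), sqrt_sq zero_le_two]
  have hdouble := sum_range_two_mul_add_of_symm hsymm
  rw [hmid, hend, add_zero, add_zero, hsum, hsqrt, nsmul_eq_mul, Nat.cast_ofNat] at hdouble
  linarith

theorem alternating_quadratic_sine_sum (k : ℕ) (hk : 0 < k) :
    ∑ n ∈ Finset.Icc 1 (2 * k), (-1 : ℝ) ^ n * Real.sin (π * (n : ℝ) ^ 2 / (4 * k)) =
      (-1 : ℝ) ^ k * Real.sqrt ((k : ℝ) / 2) := by
  have hends : sin (π * (0 : ℕ) ^ 2 / (4 * k)) = 0 ∧ sin (π * (2 * k : ℕ) ^ 2 / (4 * k)) = 0 := by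
    simpa using sin_pi_mul_two_mul_mul_sq_div hk.ne' 1
  calc
    _ = ∑ n ∈ range (2 * k), (-1 : ℝ) ^ n * sin (π * n ^ 2 / (4 * k)) :=
      sum_Icc_one_eq_sum_range (by rw [hends.1, hends.2, mul_zero, mul_zero])
    _ = (-1) ^ k * ∑ n ∈ range (2 * k), sin (π * (2 * k + n : ℕ) ^ 2 / (4 * k)) := by
      rw [mul_sum]
      exact sum_congr rfl fun n _ => neg_one_pow_mul_sin_pi_mul_sq_div hk.ne' n
    _ = (-1) ^ k * √(k / 2) := by
      rw [sum_range_sin_pi_mul_two_mul_add_sq_div]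
end

section
/- For every positive integer k, ∑_{n=1}^{2k-1} (-1)^n * cos(π n² / (4k-1)) = -1/2. -/
open Finset Real

/-!
Put `N = 4k - 1` and `ζ = exp (2πi · 2k / N)`. Since `4k = N + 1`, the `n`-th summand is the real
part of `ζ ^ n²`, so folding `n ↔ -n` turns the claim into `Re G = 0` for the quadratic Gauss sum
`G = ∑ ζ ^ x²` over `ℤ/N`.

By Dirichlet's theorem and Fermat's two-square theorem, `-1 = a² + b²` in `ℤ/N`. Multiplication by
`a + bi` then negates the form `x² + y²`, so `G²` equals the square of the conjugate sum; together
with `G * conj G = N` this gives `G² = ± N`. Finally `G = 1 + 2S` with `S` an algebraic integer, so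
`G² = N` would make `(N - 1) / 4 = S + S²` an integer, which `N ≡ 3 mod 4` forbids. Hence `G² = -N`.
-/

section FiniteRing

variable {R A : Type*} [CommRing R] [Fintype R] [CommRing A]

/-- The quadratic Gauss sum of an additive character `ψ` of a finite ring: the sum of `ψ (x²)` over
all ring elements `x`, in contrast to `gaussSum`, which is twisted by a multiplicative
character. -/
def quadraticGaussSum (ψ : AddChar R A) : A := ∑ x, ψ (x ^ 2)

theorem quadraticGaussSum_mul_quadraticGaussSum_inv [IsDomain A] (h2 : IsUnit (2 : R))
    {ψ : AddChar R A} (hψ : ψ.IsPrimitive) :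
    quadraticGaussSum ψ * quadraticGaussSum ψ⁻¹ = Fintype.card R := by
  classical
  calc quadraticGaussSum ψ * quadraticGaussSum ψ⁻¹
      = ∑ y, ∑ x, ψ (x ^ 2) * ψ (-y ^ 2) := by
        simp only [quadraticGaussSum, sum_mul_sum, AddChar.inv_apply]
        exact sum_comm
    _ = ∑ y, ∑ u, ψ (u ^ 2) * ψ (y * (2 * u)) := by
        refine sum_congr rfl fun y _ ↦ (Equiv.sum_comp (Equiv.addRight y) _).symm.trans ?_
        refine sum_congr rfl fun u _ ↦ ?_
        rw [← AddChar.map_add_eq_mul, ← AddChar.map_add_eq_mul, Equiv.coe_addRight]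
        ring_nf
    _ = ∑ u, ψ (u ^ 2) * if u = 0 then (Fintype.card R : A) else 0 := by
        rw [sum_comm]
        simp only [← mul_sum, AddChar.sum_mulShift _ hψ, h2.mul_right_eq_zero, Nat.cast_ite,
          Nat.cast_zero]
    _ = Fintype.card R := by simp

theorem quadraticGaussSum_inv_sq {a b : R} (hab : a ^ 2 + b ^ 2 = -1) (ψ : AddChar R A) :
    quadraticGaussSum ψ⁻¹ ^ 2 = quadraticGaussSum ψ ^ 2 := by
  have sq_eq (φ : AddChar R A) :
      quadraticGaussSum φ ^ 2 = ∑ z : R × R, φ (z.1 ^ 2 + z.2 ^ 2) := by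
    simp only [quadraticGaussSum, sq (Finset.sum _ _), sum_mul_sum, Fintype.sum_prod_type,
      AddChar.map_add_eq_mul]
  -- Multiplication by `a + b i`, whose norm is `-1`.
  let rotation : R × R ≃ R × R :=
    { toFun := fun z ↦ (a * z.1 - b * z.2, b * z.1 + a * z.2)
      invFun := fun z ↦ (-(a * z.1 + b * z.2), b * z.1 - a * z.2)
      left_inv := fun z ↦ by
        ext <;> dsimp only
        · linear_combination -z.1 * hab
        · linear_combination -z.2 * hab
      right_inv := fun z ↦ by
        ext <;> dsimp only
        · linear_combination -z.1 * hab
        · linear_combination -z.2 * hab }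
  rw [sq_eq, sq_eq]
  refine Fintype.sum_equiv rotation _ _ fun z ↦ ?_
  rw [AddChar.inv_apply]
  congr 1
  simp only [rotation, Equiv.coe_fn_mk]
  linear_combination -(z.1 ^ 2 + z.2 ^ 2) * hab

theorem quadraticGaussSum_sq_eq_card_or_eq_neg_card [IsDomain A] (h2 : IsUnit (2 : R))
    {a b : R} (hab : a ^ 2 + b ^ 2 = -1) {ψ : AddChar R A} (hψ : ψ.IsPrimitive) :
    quadraticGaussSum ψ ^ 2 = Fintype.card R ∨ quadraticGaussSum ψ ^ 2 = -Fintype.card R := by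
  rw [← sq_eq_sq_iff_eq_or_eq_neg, ← quadraticGaussSum_mul_quadraticGaussSum_inv h2 hψ, mul_pow,
    quadraticGaussSum_inv_sq hab, sq (quadraticGaussSum ψ ^ 2)]

end FiniteRing

theorem exists_sq_add_sq_eq_neg_one_zmod {N : ℕ} (hN : Odd N) :
    ∃ a b : ZMod N, a ^ 2 + b ^ 2 = -1 := by
  obtain ⟨m, rfl⟩ := hN
  -- `4 m + 1 = 2 N - 1` is `1` modulo `4` and `-1` modulo `N`.
  have hcop : (4 * m + 1).Coprime (4 * (2 * m + 1)) := by
    refine Nat.Coprime.mul_right (by simp) (Nat.isCoprime_iff_coprime.1 ⟨-1, 2, ?_⟩)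
    push_cast
    ring
  obtain ⟨p, -, hp, hmod⟩ := Nat.forall_exists_prime_gt_and_modEq 0 (by lia) hcop
  have hp4 : p % 4 ≠ 3 := by
    have : p % 4 = (4 * m + 1) % 4 := hmod.of_mul_right _
    lia
  have hpN : (p : ZMod (2 * m + 1)) = (4 * m + 1 : ℕ) :=
    (ZMod.natCast_eq_natCast_iff _ _ _).2 (hmod.of_mul_left _)
  have hN0 : ((2 * m + 1 : ℕ) : ZMod (2 * m + 1)) = 0 := ZMod.natCast_self _
  have := Fact.mk hp
  obtain ⟨a, b, rfl⟩ := Nat.Prime.sq_add_sq hp4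
  refine ⟨a, b, ?_⟩
  push_cast at hpN hN0
  linear_combination hpN + 2 * hN0

theorem sum_zmod_of_even {M : Type*} [AddCommMonoid M] {N m : ℕ} [NeZero N] (hN : N = 2 * m + 1)
    {f : ZMod N → M} (hf : ∀ x, f (-x) = f x) :
    ∑ x, f x = f 0 + 2 • ∑ n ∈ Icc 1 m, f n := by
  have sum_Icc : ∑ n ∈ Icc 1 m, f n = ∑ i ∈ range m, f (i + 1 : ℕ) := by
    rw [range_eq_Ico, sum_Ico_add' (fun n : ℕ ↦ f n) 0 m 1]
    rfl
  have sum_upper_half : ∑ i ∈ range m, f (m + i + 1 : ℕ) = ∑ i ∈ range m, f (i + 1 : ℕ) := by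
    rw [← sum_range_reflect]
    refine sum_congr rfl fun i hi ↦ ?_
    have hi_lt : i < m := mem_range.1 hi
    have sum_eq_zero : ((i + 1 : ℕ) + (m + (m - 1 - i) + 1 : ℕ) : ZMod N) = 0 := by
      rw [← Nat.cast_add, ZMod.natCast_eq_zero_iff]
      exact ⟨1, by lia⟩
    rw [← hf (i + 1 : ℕ), neg_eq_of_add_eq_zero_right sum_eq_zero]
  calc ∑ x, f x = ∑ i ∈ range N, f i :=
        sum_nbij' ZMod.val Nat.cast (fun x _ ↦ mem_range.2 x.val_lt) (fun _ _ ↦ mem_univ _)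
          (fun x _ ↦ x.natCast_zmod_val) (fun _ hi ↦ ZMod.val_cast_of_lt (mem_range.1 hi))
          (fun x _ ↦ by rw [x.natCast_zmod_val])
    _ = ∑ i ∈ range (m + m + 1), f i := by simp only [hN, two_mul]
    _ = f 0 + 2 • ∑ n ∈ Icc 1 m, f n := by
        rw [sum_range_succ', sum_range_add, sum_upper_half, ← sum_Icc, two_nsmul, Nat.cast_zero,
          add_comm]

theorem quadraticGaussSum_zmod_eq {A : Type*} [CommRing A] {N m : ℕ} [NeZero N]
    (hN : N = 2 * m + 1) (ψ : AddChar (ZMod N) A) :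
    quadraticGaussSum ψ = 1 + 2 * ∑ n ∈ Icc 1 m, ψ ((n : ZMod N) ^ 2) := by
  rw [quadraticGaussSum, sum_zmod_of_even hN fun x ↦ by rw [neg_sq], zero_pow two_ne_zero,
    AddChar.map_zero_eq_one, nsmul_eq_mul, Nat.cast_ofNat]

theorem isIntegral_addChar {G A : Type*} [AddGroup G] [Finite G] [CommRing A]
    (ψ : AddChar G A) (x : G) : IsIntegral ℤ (ψ x) := by
  refine .of_pow (addOrderOf_pos x) ?_
  rw [← AddChar.map_nsmul_eq_pow, addOrderOf_nsmul_eq_zero, AddChar.map_zero_eq_one]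
  exact isIntegral_one

section CharZero

variable {K : Type*} [Field K] [CharZero K]

theorem dvd_of_isIntegral_of_mul_eq_intCast {t : K} (ht : IsIntegral ℤ t) {d n : ℤ}
    (h : d * t = n) : d ∣ n := by
  rcases eq_or_ne d 0 with rfl | hd
  · exact zero_dvd_iff.2 (by simpa using h.symm)
  have t_eq : t = algebraMap ℚ K (n / d) := by
    rw [map_div₀, map_intCast, map_intCast, eq_div_iff (by exact_mod_cast hd), mul_comm, h]
  rw [t_eq, isIntegral_algebraMap_iff (algebraMap ℚ K).injective] at ht
  obtain ⟨c, hc⟩ := IsIntegrallyClosed.isIntegral_iff.1 ht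
  rw [algebraMap_int_eq, eq_intCast, eq_div_iff (by exact_mod_cast hd)] at hc
  exact ⟨c, by rw [mul_comm]; exact_mod_cast hc.symm⟩

theorem quadraticGaussSum_zmod_sq_of_mod_four_eq_three {N : ℕ} [NeZero N] (hN : N % 4 = 3)
    {ψ : AddChar (ZMod N) K} (hψ : ψ.IsPrimitive) : quadraticGaussSum ψ ^ 2 = -N := by
  have hodd : Odd N := Nat.odd_iff.2 (by lia)
  have h2 : IsUnit (2 : ZMod N) := (ZMod.isUnit_iff_coprime 2 N).2 hodd.coprime_two_left
  obtain ⟨a, b, hab⟩ := exists_sq_add_sq_eq_neg_one_zmod hodd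
  have hsq := quadraticGaussSum_sq_eq_card_or_eq_neg_card h2 hab hψ
  rw [ZMod.card] at hsq
  refine hsq.resolve_left fun hpos ↦ ?_
  obtain ⟨m, hm⟩ := hodd
  set S := ∑ n ∈ Icc 1 m, ψ ((n : ZMod N) ^ 2)
  have hS_int : IsIntegral ℤ S := IsIntegral.sum _ fun n _ ↦ isIntegral_addChar ψ _
  rw [quadraticGaussSum_zmod_eq hm] at hpos
  have hdvd : (4 : ℤ) ∣ N - 1 := by
    refine dvd_of_isIntegral_of_mul_eq_intCast (hS_int.add (hS_int.pow 2)) ?_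
    push_cast
    linear_combination hpos
  lia

end CharZero

open scoped ComplexOrder in
theorem sum_re_addChar_sq_zmod {N m : ℕ} (hN : N = 2 * m + 1) (hm : Odd m)
    {ψ : AddChar (ZMod N) ℂ} (hψ : ψ.IsPrimitive) :
    ∑ n ∈ Icc 1 m, (ψ ((n : ZMod N) ^ 2)).re = -1 / 2 := by
  have : NeZero N := ⟨by lia⟩
  have hsq : quadraticGaussSum ψ ^ 2 ≤ 0 := by
    have hN4 : N % 4 = 3 := by grind
    rw [quadraticGaussSum_zmod_sq_of_mod_four_eq_three hN4 hψ]
    exact neg_nonpos.2 N.cast_nonneg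
  have hre := Complex.sq_nonpos_iff.1 hsq
  rw [quadraticGaussSum_zmod_eq hN, Complex.add_re, Complex.one_re, two_mul, Complex.add_re,
    Complex.re_sum] at hre
  linarith

theorem re_exp_pow_sq {k N : ℕ} (hN : 4 * k = N + 1) (n : ℕ) :
    (Complex.exp (2 * π * Complex.I * ((2 * k : ℕ) / N)) ^ n ^ 2).re =
      (-1) ^ n * Real.cos (π * n ^ 2 / N) := by
  have hN0 : (N : ℂ) ≠ 0 := Nat.cast_ne_zero.2 (by lia)
  have hNk : 4 * (k : ℂ) = N + 1 := by exact_mod_cast hN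
  have exp_eq : Complex.exp (2 * π * Complex.I * ((2 * k : ℕ) / N)) ^ n ^ 2 =
      Complex.exp ((π * n ^ 2 / N + (n ^ 2 : ℕ) * π : ℝ) * Complex.I) := by
    rw [← Complex.exp_nat_mul]
    congr 1
    push_cast
    field_simp
    linear_combination n ^ 2 * hNk
  rw [exp_eq, Complex.exp_ofReal_mul_I_re, Real.cos_add_nat_mul_pi]
  congr 1
  exact neg_one_pow_congr (by simp [Nat.even_pow])

theorem alternating_cosine_sum_4k_sub_one (k : ℕ) (hk : 0 < k) :
    ∑ n ∈ Finset.Icc 1 (2 * k - 1), (-1 : ℝ) ^ n *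
        Real.cos (π * (n : ℝ) ^ 2 / (4 * (k : ℝ) - 1)) = -1 / 2 := by
  obtain ⟨N, hN⟩ : ∃ N, 4 * k = N + 1 := ⟨4 * k - 1, by lia⟩
  have : NeZero N := ⟨by lia⟩
  have hN_real : 4 * (k : ℝ) - 1 = N := by
    rw [sub_eq_iff_eq_add]
    exact_mod_cast hN
  have hcop : (2 * k).Coprime N :=
    Nat.isCoprime_iff_coprime.1 ⟨2, -1, by push_cast; lia⟩
  have hζ := Complex.isPrimitiveRoot_exp_of_coprime (2 * k) N (NeZero.ne N) hcop
  have hψ := AddChar.zmodChar_primitive_of_primitive_root N hζ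
  rw [← sum_re_addChar_sq_zmod (m := 2 * k - 1) (by lia) (Nat.odd_iff.2 (by lia)) hψ]
  refine sum_congr rfl fun n _ ↦ ?_
  rw [hN_real, ← re_exp_pow_sq hN, ← AddChar.zmodChar_apply' hζ.pow_eq_one, Nat.cast_pow]
end

section
/- For every positive integer k, ∑_{n=1}^{2k-1} (-1)^n * sin(π n² / (4k-1)) = (-1)^k * √(4k-1)/2. -/
open Finset Real

/-!
Let `N = 2m + 1` and `ζ = -exp (πi / N)`. Since `(-1) ^ n = (-1) ^ (n ^ 2)`, the sum in question is
the imaginary part of half the quadratic Gauss sum `∑ ζ ^ (n ^ 2)` of the primitive `N`-th root of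
unity `ζ`, so the point is to find the sign of that sum. Following Gauss, the alternating sum of the
`q`-binomial coefficients `[2m, j]_q` factors as `∏ (1 - q ^ (2i + 1))`, and at `q = ζ⁻²` the
coefficients themselves are, up to sign, powers of `ζ`. Completing the square then gives, for every
primitive `N`-th root of unity in a field, `∑ ζ ^ (n ^ 2) = ∏ (ζ ^ (2i + 1) - ζ ^ (-(2i + 1)))`.
The square of the product is `(-1) ^ m * N`, and for the chosen `ζ` each factor is `-i` times a
positive sine, which leaves only `(-i) ^ m * √N`.
-/

section GaussBinom

variable {R : Type*}

/-- The Gaussian binomial coefficient `[n, k]_q`. It is defined by the `q`-Pascal rule rather than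
as a quotient of `q`-factorials because it is to be evaluated at roots of unity, where that quotient
can be `0 / 0`. -/
def gaussBinom [Semiring R] (q : R) : ℕ → ℕ → R
  | _, 0 => 1
  | 0, _ + 1 => 0
  | n + 1, k + 1 => gaussBinom q n k + q ^ (k + 1) * gaussBinom q n (k + 1)

@[simp]
lemma gaussBinom_zero_right [Semiring R] (q : R) (n : ℕ) : gaussBinom q n 0 = 1 := by
  cases n <;> rfl

lemma gaussBinom_succ_succ [Semiring R] (q : R) (n k : ℕ) :
    gaussBinom q (n + 1) (k + 1) = gaussBinom q n k + q ^ (k + 1) * gaussBinom q n (k + 1) :=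
  rfl

lemma gaussBinom_eq_zero_of_lt [Semiring R] (q : R) {n k : ℕ} (h : n < k) :
    gaussBinom q n k = 0 := by
  induction n generalizing k with
  | zero =>
    obtain ⟨k, rfl⟩ := Nat.exists_eq_add_of_lt h
    simp [gaussBinom]
  | succ n ih =>
    obtain ⟨k, rfl⟩ := Nat.exists_eq_succ_of_ne_zero (Nat.ne_zero_of_lt h)
    rw [gaussBinom_succ_succ, ih (by lia), ih (by lia), mul_zero, add_zero]

lemma one_sub_pow_mul_gaussBinom_succ_succ [CommRing R] (q : R) (n k : ℕ) :
    (1 - q ^ (k + 1)) * gaussBinom q (n + 1) (k + 1) = (1 - q ^ (n + 1)) * gaussBinom q n k := by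
  induction n generalizing k with
  | zero => cases k <;> simp [gaussBinom]
  | succ n ih =>
    cases k with
    | zero =>
      have ih₀ := ih 0
      simp only [gaussBinom_succ_succ q (n + 1), gaussBinom_zero_right] at ih₀ ⊢
      linear_combination q * ih₀
    | succ k =>
      rw [gaussBinom_succ_succ q (n + 1)]
      linear_combination q ^ (k + 2) * ih (k + 1) + q * ih k
        - q * (1 - q ^ (n + 1)) * gaussBinom_succ_succ q n k

lemma sum_neg_one_pow_mul_gaussBinom_add_two [CommRing R] (q : R) (n : ℕ) :
    ∑ k ∈ range (n + 3), (-1) ^ k * gaussBinom q (n + 2) k =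
      (1 - q ^ (n + 1)) * ∑ k ∈ range (n + 1), (-1) ^ k * gaussBinom q n k := by
  have telescope (k : ℕ) : (-1) ^ (k + 1) * gaussBinom q (n + 2) (k + 1) =
      ((-1) ^ (k + 1) * gaussBinom q (n + 1) (k + 1) - (-1) ^ k * gaussBinom q (n + 1) k) +
        (1 - q ^ (n + 1)) * ((-1) ^ k * gaussBinom q n k) := by
    rw [gaussBinom_succ_succ q (n + 1)]
    linear_combination (-1) ^ k * one_sub_pow_mul_gaussBinom_succ_succ q n k
  rw [sum_range_succ', sum_congr rfl fun k _ ↦ telescope k, sum_add_distrib,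
    sum_range_sub fun k ↦ (-1) ^ k * gaussBinom q (n + 1) k, ← mul_sum, sum_range_succ _ (n + 1),
    gaussBinom_eq_zero_of_lt q (by lia : n + 1 < n + 2), gaussBinom_eq_zero_of_lt q n.lt_succ_self]
  simp

lemma sum_neg_one_pow_mul_gaussBinom_two_mul [CommRing R] (q : R) (m : ℕ) :
    ∑ k ∈ range (2 * m + 1), (-1) ^ k * gaussBinom q (2 * m) k =
      ∏ i ∈ range m, (1 - q ^ (2 * i + 1)) := by
  induction m with
  | zero => simp
  | succ m ih =>
    rw [prod_range_succ, ← ih, mul_comm _ (1 - _)]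
    exact sum_neg_one_pow_mul_gaussBinom_add_two q (2 * m)

lemma gaussBinom_mul_neg_one_pow_mul_pow_choose_of_isPrimitiveRoot [CommRing R] [IsDomain R]
    {q : R} {n k : ℕ} (hq : IsPrimitiveRoot q (n + 1)) (hk : k ≤ n) :
    gaussBinom q n k * ((-1) ^ k * q ^ (k + 1).choose 2) = 1 := by
  induction k with
  | zero => simp
  | succ k ih =>
    have pascal_vanishes : gaussBinom q n k + q ^ (k + 1) * gaussBinom q n (k + 1) = 0 := by
      have absorb := one_sub_pow_mul_gaussBinom_succ_succ q n k
      rw [hq.pow_eq_one, sub_self, zero_mul, gaussBinom_succ_succ] at absorb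
      exact (mul_eq_zero.mp absorb).resolve_left
        (sub_ne_zero.mpr (hq.pow_ne_one_of_pos_of_lt k.succ_ne_zero (by lia)).symm)
    have choose_succ : (k + 2).choose 2 = (k + 1) + (k + 1).choose 2 := by
      rw [Nat.choose_succ_succ', Nat.choose_one_right]
    rw [choose_succ, pow_add q]
    linear_combination ih (by lia) - (-1) ^ k * q ^ (k + 1).choose 2 * pascal_vanishes

end GaussBinom

section QuadraticGaussSum

variable {K : Type*} [Field K] {ζ : K} {m : ℕ}

lemma sum_pow_mul_succ_eq_prod_of_isPrimitiveRoot (hζ : IsPrimitiveRoot ζ (2 * m + 1)) :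
    ∑ j ∈ range (2 * m + 1), ζ ^ (j * (j + 1)) =
      ∏ i ∈ range m, (1 - (ζ ^ 2)⁻¹ ^ (2 * i + 1)) := by
  have hq : IsPrimitiveRoot (ζ ^ 2)⁻¹ (2 * m + 1) := (hζ.pow_of_coprime 2 (by simp)).inv
  rw [← sum_neg_one_pow_mul_gaussBinom_two_mul]
  refine sum_congr rfl fun j hj ↦ ?_
  have h := gaussBinom_mul_neg_one_pow_mul_pow_choose_of_isPrimitiveRoot hq
    (Nat.lt_succ_iff.mp (mem_range.mp hj))
  have two_mul_choose : 2 * (j + 1).choose 2 = j * (j + 1) := by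
    rw [mul_comm, ← Nat.add_one_mul_choose_eq, Nat.choose_one_right, mul_comm]
  rw [inv_pow, ← pow_mul, two_mul_choose, ← mul_assoc, ← div_eq_mul_inv,
    div_eq_one_iff_eq (pow_ne_zero _ (hζ.ne_zero (by simp)))] at h
  rw [← h, mul_comm]

lemma sum_pow_mul_succ_eq_mul_sum_zpow_sq (hζ : ζ ^ (2 * m + 1) = 1) :
    ∑ j ∈ range (2 * m + 1), ζ ^ (j * (j + 1)) =
      ζ ^ (m * (m + 1)) * ∑ n ∈ Icc (-m : ℤ) m, ζ ^ (n ^ 2) := by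
  have hζ₀ : ζ ≠ 0 := (IsUnit.of_pow_eq_one hζ (by simp)).ne_zero
  rw [mul_sum]
  refine sum_bij' (fun j _ ↦ (j : ℤ) - m) (fun n _ ↦ (n + m).toNat) ?_ ?_ ?_ ?_ fun j _ ↦ ?_
  any_goals simp only [mem_range, mem_Icc]; lia
  have complete_square : ((j * (j + 1) : ℕ) : ℤ) =
      ((m * (m + 1) : ℕ) : ℤ) + ((j : ℤ) - m) ^ 2 + ((2 * m + 1 : ℕ) : ℤ) * (j - m) := by
    push_cast; ring
  rw [← zpow_natCast, complete_square, zpow_add₀ hζ₀, zpow_add₀ hζ₀, zpow_mul, zpow_natCast,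
    zpow_natCast, hζ, one_zpow, mul_one]

lemma prod_pow_sub_inv_pow_eq_pow_sq_mul_prod (hζ : ζ ≠ 0) (m : ℕ) :
    ∏ i ∈ range m, (ζ ^ (2 * i + 1) - ζ⁻¹ ^ (2 * i + 1)) =
      ζ ^ (m ^ 2) * ∏ i ∈ range m, (1 - (ζ ^ 2)⁻¹ ^ (2 * i + 1)) := by
  induction m with
  | zero => simp
  | succ m ih =>
    have factor : ζ ^ (2 * m + 1) - ζ⁻¹ ^ (2 * m + 1) =
        ζ ^ (2 * m + 1) * (1 - (ζ ^ 2)⁻¹ ^ (2 * m + 1)) := by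
      rw [mul_sub, mul_one, ← mul_pow, sq, mul_inv, mul_inv_cancel_left₀ hζ]
    rw [prod_range_succ, prod_range_succ, ih, factor]
    ring

theorem sum_zpow_sq_eq_prod_of_isPrimitiveRoot (hζ : IsPrimitiveRoot ζ (2 * m + 1)) :
    ∑ n ∈ Icc (-m : ℤ) m, ζ ^ (n ^ 2) =
      ∏ i ∈ range m, (ζ ^ (2 * i + 1) - ζ⁻¹ ^ (2 * i + 1)) := by
  have pow_cancel : ζ ^ (m ^ 2) * ζ ^ (m * (m + 1)) = 1 := by
    rw [← pow_add, show m ^ 2 + m * (m + 1) = (2 * m + 1) * m by ring, pow_mul, hζ.pow_eq_one,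
      one_pow]
  rw [prod_pow_sub_inv_pow_eq_pow_sq_mul_prod (hζ.ne_zero (by simp)),
    ← sum_pow_mul_succ_eq_prod_of_isPrimitiveRoot hζ,
    sum_pow_mul_succ_eq_mul_sum_zpow_sq hζ.pow_eq_one, ← mul_assoc, pow_cancel, one_mul]

lemma prod_range_two_mul {M : Type*} [CommMonoid M] (f : ℕ → M) (m : ℕ) :
    ∏ r ∈ range (2 * m), f r = ∏ i ∈ range m, (f (2 * i) * f (2 * i + 1)) := by
  induction m with
  | zero => simp
  | succ m ih => rw [mul_add_one, prod_range_succ, prod_range_succ, prod_range_succ, ih, mul_assoc]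

lemma prod_pow_sub_inv_pow_sq_of_isPrimitiveRoot (hζ : IsPrimitiveRoot ζ (2 * m + 1)) :
    (∏ i ∈ range m, (ζ ^ (2 * i + 1) - ζ⁻¹ ^ (2 * i + 1))) ^ 2 = (-1) ^ m * (2 * m + 1) := by
  have hζ₀ : ζ ≠ 0 := hζ.ne_zero (by simp)
  have factor_sq (i : ℕ) (hi : i ∈ range m) : (ζ ^ (2 * i + 1) - ζ⁻¹ ^ (2 * i + 1)) ^ 2 =
      -((1 - (ζ ^ 2) ^ (2 * i + 1)) * (1 - (ζ ^ 2) ^ (2 * (m - 1 - i) + 1 + 1))) := by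
    -- Modulo `2 * m + 1` the exponents `-(2 * i + 1)` are `2, 4, …, 2 * m`, so together with the
    -- exponents `2 * i + 1` they exhaust the nonzero residues.
    have conj : ζ⁻¹ ^ (2 * i + 1) = ζ ^ (2 * (m - 1 - i) + 1 + 1) := by
      rw [inv_pow]
      refine inv_eq_of_mul_eq_one_right ?_
      rw [← pow_add, ← hζ.pow_eq_one]
      congr 1
      have := mem_range.mp hi
      lia
    have cancel : ζ ^ (2 * i + 1) * ζ⁻¹ ^ (2 * i + 1) = 1 := by
      rw [← mul_pow, mul_inv_cancel₀ hζ₀, one_pow]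
    rw [pow_right_comm ζ 2, pow_right_comm ζ 2, ← conj]
    linear_combination (ζ ^ (2 * i + 1) * ζ⁻¹ ^ (2 * i + 1) - 1) * cancel
  have order := (hζ.pow_of_coprime 2 (by simp)).prod_one_sub_pow_eq_order
  rw [prod_range_two_mul, prod_mul_distrib,
    ← prod_range_reflect fun i ↦ 1 - (ζ ^ 2) ^ (2 * i + 1 + 1), ← prod_mul_distrib] at order
  rw [← prod_pow, prod_congr rfl factor_sq, prod_neg, card_range, order]
  push_cast
  rfl

end QuadraticGaussSum

lemma isPrimitiveRoot_neg_exp_pi_mul_I_div (m : ℕ) :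
    IsPrimitiveRoot (-Complex.exp (π * Complex.I / (2 * m + 1))) (2 * m + 1) := by
  have hN : (2 * m + 1 : ℂ) ≠ 0 := by exact_mod_cast (2 * m).succ_ne_zero
  have coprime : (m + 1).Coprime (2 * m + 1) := by
    rw [show 2 * m + 1 = m + (m + 1) by ring]
    simp
  convert Complex.isPrimitiveRoot_exp_of_coprime (m + 1) (2 * m + 1) (by simp) coprime using 1
  rw [← neg_one_mul, ← Complex.exp_pi_mul_I, ← Complex.exp_add]
  congr 1
  push_cast
  field_simp
  ring

lemma neg_exp_mul_I_pow_sub_inv_pow_of_odd (θ : ℂ) {r : ℕ} (hr : Odd r) :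
    (-Complex.exp (θ * Complex.I)) ^ r - (-Complex.exp (θ * Complex.I))⁻¹ ^ r =
      -Complex.I * (2 * Complex.sin (r * θ)) := by
  rw [inv_pow, hr.neg_pow, inv_neg, ← Complex.exp_nat_mul, ← Complex.exp_neg, Complex.two_sin]
  ring_nf
  simp only [Complex.I_sq]
  ring

lemma sin_mul_pi_div_nonneg {x y : ℝ} (hx : 0 ≤ x) (hxy : x ≤ y) : 0 ≤ sin (x * (π / y)) := by
  have hy : 0 ≤ y := hx.trans hxy
  apply sin_nonneg_of_nonneg_of_le_pi (by positivity)
  rw [mul_div_left_comm]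
  exact mul_le_of_le_one_right pi_nonneg (div_le_one_of_le₀ hxy hy)

theorem sum_neg_exp_zpow_sq (m : ℕ) :
    ∑ n ∈ Icc (-m : ℤ) m, (-Complex.exp (π * Complex.I / (2 * m + 1))) ^ (n ^ 2) =
      (-Complex.I) ^ m * (√(2 * m + 1) : ℝ) := by
  set P : ℝ := ∏ i ∈ range m, (2 * sin ((2 * i + 1 : ℕ) * (π / (2 * m + 1))))
  have hζ := isPrimitiveRoot_neg_exp_pi_mul_I_div m
  have prod_eq : ∏ i ∈ range m, ((-Complex.exp (π * Complex.I / (2 * m + 1))) ^ (2 * i + 1) -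
      (-Complex.exp (π * Complex.I / (2 * m + 1)))⁻¹ ^ (2 * i + 1)) = (-Complex.I) ^ m * P := by
    rw [mul_div_right_comm, prod_congr rfl fun i _ ↦
      neg_exp_mul_I_pow_sub_inv_pow_of_odd _ (odd_two_mul_add_one i), prod_mul_distrib, prod_const,
      card_range]
    push_cast [P]
    rfl
  have P_nonneg : 0 ≤ P := prod_nonneg fun i hi ↦ by
    have := mem_range.mp hi
    refine mul_nonneg zero_le_two (sin_mul_pi_div_nonneg (Nat.cast_nonneg _) ?_)
    exact_mod_cast (by lia : 2 * i + 1 ≤ 2 * m + 1)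
  have P_sq : P ^ 2 = 2 * m + 1 := by
    have h := prod_pow_sub_inv_pow_sq_of_isPrimitiveRoot hζ
    rw [prod_eq, mul_pow, pow_right_comm, neg_sq, Complex.I_sq] at h
    exact_mod_cast mul_left_cancel₀ (pow_ne_zero m (neg_ne_zero.mpr one_ne_zero)) h
  rw [sum_zpow_sq_eq_prod_of_isPrimitiveRoot hζ, prod_eq, ← P_sq, sqrt_sq P_nonneg]

theorem one_add_two_mul_sum_neg_one_pow_mul_exp (m : ℕ) :
    1 + 2 * ∑ n ∈ Icc 1 m, (-1 : ℂ) ^ n *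
        Complex.exp ((π * (n : ℝ) ^ 2 / (2 * m + 1) : ℝ) * Complex.I) =
      (-Complex.I) ^ m * (√(2 * m + 1) : ℝ) := by
  have term (n : ℕ) : (-Complex.exp (π * Complex.I / (2 * m + 1))) ^ ((n : ℤ) ^ 2) =
      (-1) ^ n * Complex.exp ((π * (n : ℝ) ^ 2 / (2 * m + 1) : ℝ) * Complex.I) := by
    have parity : (-1 : ℂ) ^ (n ^ 2) = (-1) ^ n := by
      rw [sq, pow_mul]
      rcases neg_one_pow_eq_or ℂ n with h | h <;> simp [h]
    rw [← Nat.cast_pow, zpow_natCast, neg_pow, parity, ← Complex.exp_nat_mul]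
    congr 2
    push_cast
    ring
  have even : (fun n : ℤ ↦ (-Complex.exp (π * Complex.I / (2 * m + 1))) ^ (n ^ 2)).Even :=
    fun n ↦ by simp only [neg_sq]
  rw [← sum_neg_exp_zpow_sq, sum_Icc_of_even_eq_range even, range_eq_Ico,
    sum_eq_sum_Ico_succ_bot (Nat.add_one_pos m), zero_add, Ico_add_one_right_eq_Icc,
    sum_congr rfl fun n _ ↦ term n, Nat.cast_zero, zero_pow two_ne_zero, zpow_zero, nsmul_eq_mul,
    Nat.cast_ofNat]
  ring

theorem sum_neg_one_pow_mul_sin (m : ℕ) :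
    ∑ n ∈ Icc 1 m, (-1 : ℝ) ^ n * sin (π * (n : ℝ) ^ 2 / (2 * m + 1)) =
      ((-Complex.I) ^ m).im * √(2 * m + 1) / 2 := by
  have im_term (n : ℕ) (x : ℝ) :
      ((-1 : ℂ) ^ n * Complex.exp (x * Complex.I)).im = (-1 : ℝ) ^ n * sin x := by
    rw [← Complex.exp_ofReal_mul_I_im, ← Complex.im_ofReal_mul]
    push_cast
    rfl
  have h := congrArg Complex.im (one_add_two_mul_sum_neg_one_pow_mul_exp m)
  rw [Complex.im_mul_ofReal, Complex.add_im, Complex.one_im, zero_add, ← Complex.ofReal_ofNat 2,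
    Complex.im_ofReal_mul, Complex.im_sum, sum_congr rfl fun n _ ↦ im_term n _] at h
  rw [← h, mul_div_cancel_left₀ _ two_ne_zero]

lemma neg_I_pow_two_mul_sub_one_im {k : ℕ} (hk : 0 < k) :
    ((-Complex.I) ^ (2 * k - 1)).im = (-1) ^ k := by
  obtain ⟨l, rfl⟩ := Nat.exists_eq_add_one_of_ne_zero hk.ne'
  have h : (-Complex.I) ^ (2 * (l + 1) - 1) = ((-1 : ℝ) ^ (l + 1) : ℝ) * Complex.I := by
    rw [show 2 * (l + 1) - 1 = 2 * l + 1 by lia, pow_succ, pow_mul, neg_sq, Complex.I_sq]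
    push_cast
    ring
  rw [h, Complex.im_ofReal_mul, Complex.I_im, mul_one]

theorem alternating_sine_sum_4k_sub_one (k : ℕ) (hk : 0 < k) :
    ∑ n ∈ Finset.Icc 1 (2 * k - 1), (-1 : ℝ) ^ n *
        Real.sin (π * (n : ℝ) ^ 2 / (4 * (k : ℝ) - 1)) =
      (-1 : ℝ) ^ k * Real.sqrt (4 * (k : ℝ) - 1) / 2 := by
  have modulus : 4 * (k : ℝ) - 1 = 2 * ((2 * k - 1 : ℕ) : ℝ) + 1 := by
    rw [Nat.cast_pred (by lia)]
    push_cast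
    ring
  rw [modulus, sum_neg_one_pow_mul_sin, neg_I_pow_two_mul_sub_one_im hk]
end

section
/- For every positive integer k, the odd-indexed quadratic Gauss cosine sum satisfies ∑_{n=1}^{2k-1} cos(π (2n-1)² / (4(2k-1))) = √(k - 1/2). -/
open Finset Real

/-!
Gauss's evaluation. The alternating sum of the `q`-binomial coefficients `[2m, j]` equals
`(1 - q)(1 - q³)⋯(1 - q^(2m-1))`. When `q = ζ⁻¹` is a primitive root of unity of order
`N = 2m + 1`, the `j`-th term `(-1)^j [2m, j]` is `ζ^(j(j+1)/2)`, so the Gauss sum of these powers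
is `∏ (1 - ζ^(2i))` over `1 ≤ i ≤ m`. This product and its complex conjugate multiply to `N`,
which gives its modulus; for `ζ = exp (2πi/N)` every factor has a known argument, which gives its
phase. Finally `(2j+1)² = 8 · j(j+1)/2 + 1`, so the odd-indexed sum is the Gauss sum rotated by
the angle `π / (4N)`, and its argument is exactly `π / 4`.
-/

section QBinomial

/-- The Gaussian binomial coefficient of `n` and `j` at `q`, defined by the `q`-Pascal rule so
that it makes sense when `q` is a root of unity and the quotient of `q`-factorials does not. -/
def qBinomial {R : Type*} [Semiring R] (q : R) : ℕ → ℕ → R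
  | _, 0 => 1
  | 0, _ + 1 => 0
  | n + 1, j + 1 => qBinomial q n j + q ^ (j + 1) * qBinomial q n (j + 1)

section Semiring

variable {R : Type*} [Semiring R] (q : R)

@[simp]
lemma qBinomial_zero_right (n : ℕ) : qBinomial q n 0 = 1 := by
  cases n <;> rfl

lemma qBinomial_succ_succ (n j : ℕ) :
    qBinomial q (n + 1) (j + 1) = qBinomial q n j + q ^ (j + 1) * qBinomial q n (j + 1) :=
  rfl

lemma qBinomial_eq_zero_of_lt {n j : ℕ} (h : n < j) : qBinomial q n j = 0 := by
  induction n, j using qBinomial.induct with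
  | case1 n => omega
  | case2 j => rfl
  | case3 n j ih₁ ih₂ =>
    rw [qBinomial_succ_succ, ih₁ (by omega), ih₂ (by omega), mul_zero, add_zero]

end Semiring

variable {R : Type*} [CommRing R]

lemma one_sub_pow_mul_qBinomial_succ_succ (q : R) (n j : ℕ) :
    (1 - q ^ (j + 1)) * qBinomial q (n + 1) (j + 1) = (1 - q ^ (n + 1)) * qBinomial q n j := by
  induction n generalizing j with
  | zero => cases j <;> simp [qBinomial]
  | succ n ih =>
    cases j with
    | zero =>
      have h := ih 0
      rw [qBinomial_zero_right] at h
      rw [qBinomial_succ_succ, qBinomial_zero_right]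
      linear_combination q * h
    | succ j =>
      rw [qBinomial_succ_succ q (n + 1) (j + 1)]
      linear_combination q ^ (j + 2) * ih (j + 1) + q * ih j -
        q * (1 - q ^ (n + 1)) * qBinomial_succ_succ q n j

lemma alternating_sum_qBinomial_succ (q : R) (n : ℕ) :
    ∑ j ∈ range (n + 2), (-1) ^ j * qBinomial q (n + 1) j =
      ∑ j ∈ range (n + 1), (-1) ^ j * ((q ^ j - 1) * qBinomial q n j) := by
  have shift : ∑ j ∈ range (n + 1), (-1) ^ j * (q ^ j * qBinomial q n j) =
      ∑ j ∈ range (n + 1), (-1) ^ (j + 1) * (q ^ (j + 1) * qBinomial q n (j + 1)) + 1 := by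
    have h := sum_range_succ' (fun j ↦ (-1) ^ j * (q ^ j * qBinomial q n j)) (n + 1)
    rw [sum_range_succ, qBinomial_eq_zero_of_lt q n.lt_succ_self] at h
    simpa using h
  have pascal : ∑ j ∈ range (n + 1), (-1) ^ (j + 1) * qBinomial q (n + 1) (j + 1) =
      ∑ j ∈ range (n + 1), (-1) ^ (j + 1) * (q ^ (j + 1) * qBinomial q n (j + 1)) -
        ∑ j ∈ range (n + 1), (-1) ^ j * qBinomial q n j := by
    rw [← sum_sub_distrib]
    refine sum_congr rfl fun j _ ↦ ?_
    rw [qBinomial_succ_succ]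
    ring
  simp_rw [sub_mul, one_mul, mul_sub, sum_sub_distrib]
  rw [sum_range_succ', pascal, shift, qBinomial_zero_right]
  ring

lemma alternating_sum_qBinomial_add_two (q : R) (n : ℕ) :
    ∑ j ∈ range (n + 3), (-1) ^ j * qBinomial q (n + 2) j =
      (1 - q ^ (n + 1)) * ∑ j ∈ range (n + 1), (-1) ^ j * qBinomial q n j := by
  rw [alternating_sum_qBinomial_succ, sum_range_succ', pow_zero q, sub_self, zero_mul, mul_zero,
    add_zero, mul_sum]
  refine sum_congr rfl fun j _ ↦ ?_
  linear_combination (-1) ^ j * one_sub_pow_mul_qBinomial_succ_succ q n j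

theorem alternating_sum_qBinomial_two_mul (q : R) (m : ℕ) :
    ∑ j ∈ range (2 * m + 1), (-1) ^ j * qBinomial q (2 * m) j =
      ∏ i ∈ range m, (1 - q ^ (2 * i + 1)) := by
  induction m with
  | zero => simp
  | succ m ih =>
    rw [prod_range_succ, ← ih, mul_comm (∑ _ ∈ _, _),
      ← alternating_sum_qBinomial_add_two, mul_add_one]

variable [IsDomain R] {q : R}

lemma pow_mul_qBinomial_succ_of_isPrimitiveRoot {n j : ℕ} (hq : IsPrimitiveRoot q (n + 1))
    (hj : j < n) : q ^ (j + 1) * qBinomial q n (j + 1) = -qBinomial q n j := by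
  have absorption := one_sub_pow_mul_qBinomial_succ_succ q n j
  rw [hq.pow_eq_one, sub_self, zero_mul] at absorption
  have factor_ne_zero : 1 - q ^ (j + 1) ≠ 0 :=
    sub_ne_zero.mpr (hq.pow_ne_one_of_pos_of_lt j.succ_ne_zero (by omega)).symm
  have vanishes := (mul_eq_zero.mp absorption).resolve_left factor_ne_zero
  rw [qBinomial_succ_succ] at vanishes
  linear_combination vanishes

lemma pow_choose_two_mul_qBinomial_of_isPrimitiveRoot {n j : ℕ}
    (hq : IsPrimitiveRoot q (n + 1)) (hj : j ≤ n) :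
    q ^ (j + 1).choose 2 * ((-1) ^ j * qBinomial q n j) = 1 := by
  induction j with
  | zero => simp
  | succ j ih =>
    rw [Nat.choose_succ_succ' (j + 1) 1, Nat.choose_one_right, pow_add]
    linear_combination ih (by omega) - q ^ (j + 1).choose 2 * (-1) ^ j *
      pow_mul_qBinomial_succ_of_isPrimitiveRoot hq hj

end QBinomial

theorem sum_pow_choose_two_eq_prod_of_isPrimitiveRoot {R : Type*} [CommRing R] [IsDomain R]
    {ζ : R} {m : ℕ} (hζ : IsPrimitiveRoot ζ (2 * m + 1)) :
    ∑ j ∈ range (2 * m + 1), ζ ^ (j + 1).choose 2 =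
      ∏ i ∈ range m, (1 - (ζ ^ 2) ^ (i + 1)) := by
  have inverse_primitive : IsPrimitiveRoot (ζ ^ (2 * m)) (2 * m + 1) :=
    hζ.pow_of_coprime _ (by simp)
  have mul_inverse : ζ * ζ ^ (2 * m) = 1 := by rw [← pow_succ', hζ.pow_eq_one]
  calc ∑ j ∈ range (2 * m + 1), ζ ^ (j + 1).choose 2
      = ∑ j ∈ range (2 * m + 1), (-1) ^ j * qBinomial (ζ ^ (2 * m)) (2 * m) j := by
        refine sum_congr rfl fun j hj ↦ ?_
        have hcancel : ζ ^ (j + 1).choose 2 * (ζ ^ (2 * m)) ^ (j + 1).choose 2 = 1 := by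
          rw [← mul_pow, mul_inverse, one_pow]
        exact left_inv_eq_right_inv hcancel <|
          pow_choose_two_mul_qBinomial_of_isPrimitiveRoot inverse_primitive
            (Nat.lt_succ_iff.mp (mem_range.mp hj))
    _ = ∏ i ∈ range m, (1 - (ζ ^ (2 * m)) ^ (2 * i + 1)) :=
        alternating_sum_qBinomial_two_mul _ m
    _ = ∏ i ∈ range m, (1 - (ζ ^ 2) ^ (i + 1)) := by
        rw [← prod_range_reflect]
        refine prod_congr rfl fun i hi ↦ ?_
        have hi : i < m := mem_range.mp hi
        have hexponent : 2 * m * (2 * (m - 1 - i) + 1) =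
            (2 * m + 1) * (2 * (m - 1 - i)) + 2 * (i + 1) := by
          zify [show i ≤ m - 1 by omega, show 1 ≤ m by omega]
          ring
        rw [← pow_mul, ← pow_mul, hexponent, pow_add, pow_mul, hζ.pow_eq_one, one_pow, one_mul]

open ComplexConjugate in
theorem norm_prod_one_sub_pow_of_isPrimitiveRoot {ω : ℂ} {m : ℕ}
    (hω : IsPrimitiveRoot ω (2 * m + 1)) :
    ‖∏ i ∈ range m, (1 - ω ^ (i + 1))‖ = √(2 * m + 1) := by
  have upper_half : ∏ i ∈ range m, (1 - ω ^ (m + i + 1)) =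
      conj (∏ i ∈ range m, (1 - ω ^ (i + 1))) := by
    rw [map_prod, ← prod_range_reflect]
    refine prod_congr rfl fun i hi ↦ ?_
    have hi : i < m := mem_range.mp hi
    have hnorm : ‖ω‖ = 1 := hω.norm'_eq_one (by omega)
    rw [map_sub, map_one, map_pow, ← Complex.inv_eq_conj hnorm, inv_pow]
    congr 1
    apply eq_inv_of_mul_eq_one_left
    rw [← pow_add, show m + (m - 1 - i) + 1 + (i + 1) = 2 * m + 1 by omega, hω.pow_eq_one]
  have hprod := hω.prod_one_sub_pow_eq_order
  rw [two_mul, prod_range_add, upper_half, Complex.mul_conj', ← two_mul] at hprod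
  rw [← Real.sqrt_sq (norm_nonneg _)]
  congr 1
  exact_mod_cast hprod

lemma one_sub_exp_two_mul_mul_I (x : ℂ) :
    1 - Complex.exp (2 * x * Complex.I) =
      2 * Complex.sin x * Complex.exp ((x - π / 2) * Complex.I) := by
  have hrotate : Complex.exp ((x - π / 2) * Complex.I) =
      -Complex.I * Complex.exp (x * Complex.I) := by
    rw [sub_mul, Complex.exp_sub, Complex.exp_pi_div_two_mul_I, div_eq_mul_inv, Complex.inv_I,
      mul_comm]
  have hcancel : Complex.exp (-x * Complex.I) * Complex.exp (x * Complex.I) = 1 := by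
    rw [← Complex.exp_add, neg_mul, neg_add_cancel, Complex.exp_zero]
  have hsquare : Complex.exp (2 * x * Complex.I) = Complex.exp (x * Complex.I) ^ 2 := by
    rw [← Complex.exp_nat_mul, Nat.cast_ofNat, mul_assoc]
  rw [hrotate, Complex.two_sin, hsquare]
  linear_combination -hcancel + (Complex.exp (-x * Complex.I) * Complex.exp (x * Complex.I) -
    Complex.exp (x * Complex.I) ^ 2) * Complex.I_sq

lemma one_sub_exp_eq_norm_mul_exp {x : ℝ} (hx : 0 ≤ x) (hxπ : x ≤ π) :
    1 - Complex.exp (2 * x * Complex.I) =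
      ‖1 - Complex.exp (2 * x * Complex.I)‖ * Complex.exp ((x - π / 2) * Complex.I) := by
  have hsin : 0 ≤ 2 * Real.sin x := mul_nonneg zero_le_two (sin_nonneg_of_nonneg_of_le_pi hx hxπ)
  have polar : 1 - Complex.exp (2 * x * Complex.I) =
      (2 * Real.sin x : ℝ) * Complex.exp ((x - π / 2 : ℝ) * Complex.I) := by
    push_cast
    exact one_sub_exp_two_mul_mul_I x
  rw [polar, norm_mul, Complex.norm_exp_ofReal_mul_I, mul_one, Complex.norm_of_nonneg hsin]
  push_cast
  rfl

lemma isPrimitiveRoot_exp_two_mul_add_one (m : ℕ) :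
    IsPrimitiveRoot (Complex.exp (2 * π * Complex.I / (2 * m + 1))) (2 * m + 1) := by
  exact_mod_cast Complex.isPrimitiveRoot_exp (2 * m + 1) (by omega)

lemma sum_range_natCast_add_one_mul_two (R : Type*) [Semiring R] (n : ℕ) :
    (∑ i ∈ range n, (i + 1 : R)) * 2 = (n + 1) * n := by
  have h := sum_range_id_mul_two (n + 1)
  rw [sum_range_succ', add_zero, Nat.add_sub_cancel] at h
  exact_mod_cast congrArg (Nat.cast : ℕ → R) h

lemma prod_one_sub_exp_pow (m : ℕ) :
    ∏ i ∈ range m, (1 - (Complex.exp (2 * π * Complex.I / (2 * m + 1)) ^ 2) ^ (i + 1)) =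
      √(2 * m + 1) *
        Complex.exp ((π * (m * (m + 1)) / (2 * m + 1) - m * (π / 2)) * Complex.I) := by
  set ω := Complex.exp (2 * π * Complex.I / (2 * m + 1)) ^ 2 with hω_def
  have hω : IsPrimitiveRoot ω (2 * m + 1) :=
    (isPrimitiveRoot_exp_two_mul_add_one m).pow_of_coprime 2 (by simp)
  have polar_factor : ∀ i ∈ range m, 1 - ω ^ (i + 1) = ‖1 - ω ^ (i + 1)‖ *
      Complex.exp (((2 * π * (i + 1) / (2 * m + 1) : ℝ) - π / 2) * Complex.I) := by
    intro i hi
    have angle_le_pi : 2 * π * (i + 1) / (2 * m + 1) ≤ π := by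
      have : (i + 1 : ℝ) ≤ m := by exact_mod_cast mem_range.mp hi
      rw [div_le_iff₀ (by positivity)]
      nlinarith [pi_pos]
    have hpow : ω ^ (i + 1) =
        Complex.exp (2 * (2 * π * (i + 1) / (2 * m + 1) : ℝ) * Complex.I) := by
      rw [hω_def, ← pow_mul, ← Complex.exp_nat_mul]
      congr 1
      push_cast
      ring
    rw [hpow]
    exact one_sub_exp_eq_norm_mul_exp (by positivity) angle_le_pi
  have sum_angles : ∑ i ∈ range m, ((2 * π * (i + 1) / (2 * m + 1) : ℝ) - π / 2 : ℂ) * Complex.I =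
      (π * (m * (m + 1)) / (2 * m + 1) - m * (π / 2)) * Complex.I := by
    have linear_in_index (i : ℕ) : ((2 * π * (i + 1) / (2 * m + 1) : ℝ) : ℂ) =
        2 * π / (2 * m + 1) * (i + 1) := by
      push_cast
      ring
    simp_rw [linear_in_index]
    rw [← sum_mul, sum_sub_distrib, ← mul_sum, sum_const, card_range, nsmul_eq_mul]
    linear_combination (π / (2 * m + 1) * Complex.I) * sum_range_natCast_add_one_mul_two ℂ m
  rw [prod_congr rfl polar_factor, prod_mul_distrib, ← Complex.exp_sum, sum_angles,
    ← Complex.ofReal_prod, ← norm_prod, norm_prod_one_sub_pow_of_isPrimitiveRoot hω]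

lemma exp_odd_sq_eq_mul_pow_choose_two (N : ℂ) (j : ℕ) :
    Complex.exp (π * (2 * j + 1) ^ 2 / (4 * N) * Complex.I) =
      Complex.exp (π / (4 * N) * Complex.I) *
        Complex.exp (2 * π * Complex.I / N) ^ (j + 1).choose 2 := by
  rw [← Complex.exp_nat_mul, ← Complex.exp_add, Nat.cast_choose_two]
  congr 1
  push_cast
  ring

theorem sum_exp_odd_sq (m : ℕ) :
    ∑ j ∈ range (2 * m + 1),
        Complex.exp (π * (2 * j + 1) ^ 2 / (4 * (2 * m + 1)) * Complex.I) =
      √(2 * m + 1) * Complex.exp (π / 4 * Complex.I) := by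
  have hN : (2 * m + 1 : ℂ) ≠ 0 := by exact_mod_cast (2 * m).succ_ne_zero
  have total_phase : (π / (4 * (2 * m + 1)) * Complex.I +
      (π * (m * (m + 1)) / (2 * m + 1) - m * (π / 2)) * Complex.I : ℂ) = π / 4 * Complex.I := by
    field_simp
    ring
  simp_rw [exp_odd_sq_eq_mul_pow_choose_two]
  rw [← mul_sum, sum_pow_choose_two_eq_prod_of_isPrimitiveRoot
    (isPrimitiveRoot_exp_two_mul_add_one m), prod_one_sub_exp_pow, mul_left_comm,
    ← Complex.exp_add, total_phase]

theorem sum_cos_odd_sq (m : ℕ) :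
    ∑ j ∈ range (2 * m + 1), Real.cos (π * (2 * j + 1) ^ 2 / (4 * (2 * m + 1))) =
      √(m + 1 / 2) := by
  have hre := congrArg Complex.re (sum_exp_odd_sq m)
  have hsqrt : √(2 * m + 1) * (√2 / 2) = √(m + 1 / 2 : ℝ) := by
    rw [show (2 * m + 1 : ℝ) = (m + 1 / 2) * 2 by ring, sqrt_mul (by positivity), mul_assoc,
      ← mul_div_assoc, mul_self_sqrt zero_le_two, div_self two_ne_zero, mul_one]
  rw [Complex.re_sum, Complex.re_ofReal_mul] at hre
  have hcos : ∀ x : ℝ, (Complex.exp (x * Complex.I)).re = Real.cos x := Complex.exp_ofReal_mul_I_re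
  rw [← hsqrt, ← cos_pi_div_four, ← hcos]
  simp_rw [← hcos]
  push_cast
  exact hre

theorem odd_indexed_quadratic_gauss_cosine_sum (k : ℕ) (hk : 0 < k) :
    ∑ n ∈ Finset.Icc 1 (2 * k - 1),
        Real.cos (π * (2 * (n : ℝ) - 1) ^ 2 / (4 * (2 * (k : ℝ) - 1))) =
      Real.sqrt ((k : ℝ) - 1 / 2) := by
  obtain ⟨m, rfl⟩ := Nat.exists_eq_add_of_le' hk
  rw [show 2 * (m + 1) - 1 = 2 * m + 1 by omega, ← Finset.Ico_add_one_right_eq_Icc,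
    Finset.sum_Ico_eq_sum_range]
  convert sum_cos_odd_sq m using 3 with j
  all_goals push_cast; ring
end
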